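/- Let C be an unbounded polynomial class. With probability 1 − O(1/n), in a uniformly random word W ∈ C_n, all the dominant loop blocks in the prefix decomposition and in the suffix decomposition of W are large, i.e., have length at least 2KQ + 1. -/

import Mathlib

open Filter Asymptotics
open scoped Classical

/-- An embedding order on words over a weighted alphabet. -/
structure EmbeddingOrder (A : Type*) (w : A → ℕ) where
  le : List A → List A → Prop
  le_refl : ∀ W, le W W
  le_trans : ∀ {U V W}, le U V → le V W → le U W
  le_antisymm : ∀ {V W}, le V W → le W V → V = W
  nil_le : ∀ W, le [] W
  weight_lt : ∀ {W V}, le W V → W ≠ V → (W.map w).sum < (V.map w).sum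
  le_iff_factor : ∀ W V, le W V ↔ ∃ Ws : List (List A),
    Ws.length = V.length ∧ Ws.flatten = W ∧ ∀ q ∈ Ws.zip V, le q.1 [q.2]

namespace EmbeddingOrder

variable {A : Type*} {w : A → ℕ} (E : EmbeddingOrder A w) {f : ℕ} (φ : Fin f → List A)

/-- The weight of a word: the sum of the weights of its letters. -/
def wt (w : A → ℕ) (W : List A) : ℕ := (W.map w).sum

/-- The class `C = A* ∩ Av(φ¹,…,φ^f)` of all words avoiding every forbidden word. -/
def Cset : Set (List A) := {W | ∀ i, ¬ E.le (φ i) W}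

/-- The prefix state of `W`: its `i`-th component is the length of the longest prefix
of the forbidden word `φ i` contained in `W`. -/
noncomputable def pstate (W : List A) : Fin f → ℕ := fun i =>
  sSup {p | p ≤ (φ i).length ∧ E.le ((φ i).take p) W}

/-- The suffix state of `W`: its `i`-th component is the length of the longest suffix
of the forbidden word `φ i` contained in `W`. -/
noncomputable def sstate (W : List A) : Fin f → ℕ := fun i =>
  sSup {p | p ≤ (φ i).length ∧ E.le ((φ i).drop ((φ i).length - p)) W}

/-- A prefix state `p` and a suffix state `s` *overlap* if `p i + s i ≥ ℓ_i` for some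
`i` (equivalently, `XY ∉ C` whenever `X` has prefix state `p` and `Y` suffix state `s`);
otherwise they are *compatible*. -/
def POverlap (p s : Fin f → ℕ) : Prop := ∃ i, (φ i).length ≤ p i + s i

/-- The (prefix) loop alphabet of a state `p`: the letters whose appending does not
change the prefix state `p`. -/
def stateLoopP (p : Fin f → ℕ) : Set A :=
  {a | ∀ X : List A, E.pstate φ X = p → E.pstate φ (X ++ [a]) = p}

/-- The suffix loop alphabet of a state `s`: the letters whose prepending does not
change the suffix state `s`. -/
def stateLoopS (s : Fin f → ℕ) : Set A :=
  {a | ∀ Y : List A, E.sstate φ Y = s → E.sstate φ (a :: Y) = s}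

/-- `p'` is a *prefix successor* of `p`: `p' ≠ p` and some letter is a transition
symbol from `p` to `p'`. -/
def PSucc (p p' : Fin f → ℕ) : Prop :=
  p ≠ p' ∧ ∃ b : A, ∀ X : List A, E.pstate φ X = p → E.pstate φ (X ++ [b]) = p'

/-- `s'` is a *suffix successor* of `s`. -/
def SSucc (s s' : Fin f → ℕ) : Prop :=
  s ≠ s' ∧ ∃ b : A, ∀ Y : List A, E.sstate φ Y = s → E.sstate φ (b :: Y) = s'

/-- Compatible states `p` (prefix) and `s` (suffix) *match* if every prefix successor
of `p` overlaps with `s` and every suffix successor of `s` overlaps with `p`. -/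
def Matches (p s : Fin f → ℕ) : Prop :=
  ¬ POverlap φ p s ∧ (∀ p', E.PSucc φ p p' → POverlap φ p' s) ∧
    ∀ s', E.SSucc φ s s' → POverlap φ p s'

/-- `ρ(S)`: the unique positive root of `1 − Σ_{a∈S} x^{weight a}` for a nonempty set
`S` of letters (realised as a supremum). -/
noncomputable def rhoOf (w : A → ℕ) (S : Set A) : ℝ :=
  sSup {x : ℝ | 0 ≤ x ∧ ∑' a : S, x ^ w (a : A) ≤ 1}

/-- The growth rate of `S*`: the reciprocal `ρ(S)⁻¹` of the positive root of
`1 − Σ_{a∈S} x^{weight a}`. -/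
noncomputable def growthOf (w : A → ℕ) (S : Set A) : ℝ := (rhoOf w S)⁻¹

/-- The dominant growth rate `γ` of the class: the largest growth rate of the loop
alphabet of a (reachable) prefix state. -/
noncomputable def gammaC : ℝ :=
  sSup {g : ℝ | ∃ X ∈ E.Cset φ, g = growthOf w (E.stateLoopP φ (E.pstate φ X))}

/-- The number of dominant loop blocks (equivalently, dominant states) in the prefix
decomposition of `W`. -/
noncomputable def domCountP (W : List A) : ℕ :=
  Set.ncard {p : Fin f → ℕ | (∃ j ≤ W.length, E.pstate φ (W.take j) = p) ∧
    growthOf w (E.stateLoopP φ p) = E.gammaC φ}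

/-- The number of dominant loop blocks (equivalently, dominant states) in the suffix
decomposition of `W`. -/
noncomputable def domCountS (W : List A) : ℕ :=
  Set.ncard {s : Fin f → ℕ | (∃ j ≤ W.length, E.sstate φ (W.drop j) = s) ∧
    growthOf w (E.stateLoopS φ s) = E.gammaC φ}

/-- `D`: the largest number of dominant states appearing on a single prefix transition
path of a word of the class. -/
noncomputable def Dmax : ℕ := sSup {d : ℕ | ∃ W ∈ E.Cset φ, E.domCountP φ W = d}

end EmbeddingOrder

namespace EmbeddingOrder

variable {A : Type*} {w : A → ℕ} (E : EmbeddingOrder A w) {f : ℕ} (φ : Fin f → List A)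

/-- The length of the loop block of the prefix state `q` in `W`: the number of
positions of `W` that are loop symbols at state `q`. -/
noncomputable def blockLenP (W : List A) (q : Fin f → ℕ) : ℕ :=
  Set.ncard {i : ℕ | i < W.length ∧ E.pstate φ (W.take i) = q ∧
    E.pstate φ (W.take (i + 1)) = q}

/-- The length of the loop block of the suffix state `q` in `W`. -/
noncomputable def blockLenS (W : List A) (q : Fin f → ℕ) : ℕ :=
  Set.ncard {i : ℕ | i < W.length ∧ E.sstate φ (W.drop (i + 1)) = q ∧
    E.sstate φ (W.drop i) = q}

/-- Every dominant loop block of the prefix decomposition of `W` is *large*: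
it has length at least `2KQ + 1`. -/
def AllDomLargeP (K Q : ℕ) (W : List A) : Prop :=
  ∀ q : Fin f → ℕ, (∃ j ≤ W.length, E.pstate φ (W.take j) = q) →
    growthOf w (E.stateLoopP φ q) = E.gammaC φ → 2 * K * Q + 1 ≤ E.blockLenP φ W q

/-- Every dominant loop block of the suffix decomposition of `W` is *large*. -/
def AllDomLargeS (K Q : ℕ) (W : List A) : Prop :=
  ∀ q : Fin f → ℕ, (∃ j ≤ W.length, E.sstate φ (W.drop j) = q) →
    growthOf w (E.stateLoopS φ q) = E.gammaC φ → 2 * K * Q + 1 ≤ E.blockLenS φ W q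

/-- The number `|P|` of prefix states of words of `C`. -/
noncomputable def Pcard : ℕ :=
  Set.ncard {p : Fin f → ℕ | ∃ X ∈ E.Cset φ, E.pstate φ X = p}

/-- The number `|S|` of suffix states of words of `C`. -/
noncomputable def Scard : ℕ :=
  Set.ncard {s : Fin f → ℕ | ∃ Y ∈ E.Cset φ, E.sstate φ Y = s}

/-- The constant `Q = 3(|P| + |S|)`. -/
noncomputable def Qconst : ℕ := 3 * (E.Pcard φ + E.Scard φ)

/-- The largest weight `K` of a letter of the alphabet. -/
noncomputable def Kmax (A : Type*) [Fintype A] (w : A → ℕ) : ℕ := Finset.univ.sup w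

end EmbeddingOrder

open EmbeddingOrder

/-!
If `γ = 1`, the loop alphabet of a valid prefix state contains no two letters, since two letters
generate exponentially many words; as `one` is contained in every letter, the only possible loop
symbol is `one`. Hence a word of the class is determined by its skeleton, the sequence of its
transition symbols, together with the lengths of its loop blocks. The skeleton has bounded length,
because prefix states only increase, so among the words of weight `n` with a given skeleton the
block lengths run through all compositions of some `N`, of the order of `n`, into parts indexed
by the visited states that have a loop symbol. Moving units from a large part to a bounded one
shows that only a proportion `O(1/N)` of these compositions has a bounded part.

The suffix decomposition of a word is the prefix decomposition of its reversal, in the class of the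
reversed words. There, too, `one` is the only loop symbol: any other loop symbol could be repeated
arbitrarily often, whereas the words of the class contain a bounded number of letters other
than `one`.
-/

section Compositions

variable {ι : Type*} [DecidableEq ι]

/-- Transfers from the part `q` to the part `p` all but `i` units. -/
def transferTo (m : ι → ℕ) (p q : ι) (i : ℕ) : ι → ℕ :=
  Function.update (Function.update m q i) p (m p + m q - i)

theorem sum_transferTo {s : Finset ι} {m : ι → ℕ} {p q : ι} {i : ℕ} (hp : p ∈ s)
    (hq : q ∈ s) (hpq : q ≠ p) (hi : i ≤ m q) : ∑ r ∈ s, transferTo m p q i r = ∑ r ∈ s, m r := by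
  have hq' : q ∈ s.erase p := Finset.mem_erase.2 ⟨hpq, hq⟩
  rw [transferTo, Finset.sum_update_of_mem hp, Finset.sdiff_singleton_eq_erase,
    Finset.sum_update_of_mem hq', Finset.sdiff_singleton_eq_erase,
    ← Finset.add_sum_erase _ m hp, ← Finset.add_sum_erase _ m hq']
  omega

theorem transferTo_inj {m m' : ι → ℕ} {p q : ι} {i i' : ℕ} (hpq : q ≠ p) (hi : i ≤ m q)
    (hi' : i' ≤ m' q) (hp : m p = m' p) (h : transferTo m p q i = transferTo m' p q i') :
    m = m' ∧ i = i' := by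
  have h_at (r) : transferTo m p q i r = transferTo m' p q i' r := congrFun h r
  have hii' : i = i' := by simpa [transferTo, hpq] using h_at q
  have hq : m q = m' q := by
    have : m p + m q - i = m' p + m' q - i' := by simpa [transferTo] using h_at p
    omega
  refine ⟨funext fun r => ?_, hii'⟩
  by_cases hrp : r = p
  · rw [hrp, hp]
  by_cases hrq : r = q
  · rw [hrq, hq]
  · simpa [transferTo, hrp, hrq] using h_at r

-- In a composition `m` with `m p ≤ L`, the other parts hold at least `N - L` units. Each unit,
-- given as the `i`-th unit of a part `q`, determines the composition `transferTo m p q i`, and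
-- conversely it is determined, together with `m`, by that composition, `q` and `m p`.
theorem card_piAntidiag_filter_apply_le_mul_sub_le {s : Finset ι} {p : ι} (hp : p ∈ s)
    (L N : ℕ) :
    {m ∈ s.piAntidiag N | m p ≤ L}.card * (N - L) ≤
      s.card * (L + 1) * (s.piAntidiag N).card := by
  set small := {m ∈ s.piAntidiag N | m p ≤ L} with hsmall
  let source := small.sigma fun m => (s.erase p).sigma fun q => Finset.range (m q)
  have hsource : small.card * (N - L) ≤ source.card := by
    rw [Finset.card_sigma, ← smul_eq_mul]
    refine Finset.card_nsmul_le_sum _ _ _ fun m hm => ?_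
    obtain ⟨hm, hmp⟩ := Finset.mem_filter.1 hm
    have hsum := (Finset.add_sum_erase s m hp).trans (Finset.mem_piAntidiag.1 hm).1
    rw [Finset.card_sigma]
    simp only [Finset.card_range]
    omega
  rw [mul_assoc, ← Finset.card_range (L + 1), ← Finset.card_product, ← Finset.card_product]
  refine hsource.trans (Finset.card_le_card_of_injOn
    (fun x => (x.2.1, x.1 p, transferTo x.1 p x.2.1 x.2.2)) ?_ ?_)
  · rintro ⟨m, q, i⟩ hx
    simp only [source, hsmall, Finset.coe_sigma, Set.mem_sigma_iff, Finset.mem_coe,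
      Finset.mem_filter, Finset.mem_piAntidiag, Finset.mem_erase, Finset.mem_range] at hx
    obtain ⟨⟨⟨hsum, hsupp⟩, hmp⟩, ⟨hqp, hq⟩, hi⟩ := hx
    simp only [Finset.coe_product, Set.mem_prod, Finset.mem_coe, Finset.mem_range,
      Finset.mem_piAntidiag]
    refine ⟨hq, by omega, (sum_transferTo hp hq hqp hi.le).trans hsum, fun r hr => ?_⟩
    by_cases hrp : r = p
    · exact hrp ▸ hp
    by_cases hrq : r = q
    · exact hrq ▸ hq
    · exact hsupp r (by simpa [transferTo, hrp, hrq] using hr)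
  · rintro ⟨m, q, i⟩ hx ⟨m', q', i'⟩ hx' heq
    simp only [source, Finset.coe_sigma, Set.mem_sigma_iff, Finset.mem_coe,
      Finset.mem_erase, Finset.mem_range] at hx hx'
    obtain ⟨-, ⟨hqp, -⟩, hi⟩ := hx
    simp only [Prod.mk.injEq] at heq
    obtain ⟨rfl, hp, heq⟩ := heq
    obtain ⟨rfl, rfl⟩ := transferTo_inj hqp hi.le hx'.2.2.le hp heq
    rfl

theorem card_piAntidiag_filter_exists_le_mul_le (s : Finset ι) (L N : ℕ) :
    {m ∈ s.piAntidiag N | ∃ p ∈ s, m p ≤ L}.card * N ≤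
      s.card * (s.card * (L + 1) + L) * (s.piAntidiag N).card := by
  have hunion : {m ∈ s.piAntidiag N | ∃ p ∈ s, m p ≤ L} =
      s.biUnion fun p => {m ∈ s.piAntidiag N | m p ≤ L} := by
    ext m
    simp only [Finset.mem_filter, Finset.mem_biUnion]
    tauto
  have hpart : ∀ p ∈ s, {m ∈ s.piAntidiag N | m p ≤ L}.card * N ≤
      (s.card * (L + 1) + L) * (s.piAntidiag N).card := fun p hp =>
    calc {m ∈ s.piAntidiag N | m p ≤ L}.card * N
        ≤ {m ∈ s.piAntidiag N | m p ≤ L}.card * ((N - L) + L) :=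
          Nat.mul_le_mul_left _ (by omega)
      _ ≤ s.card * (L + 1) * (s.piAntidiag N).card + (s.piAntidiag N).card * L := by
          rw [mul_add]
          exact Nat.add_le_add (card_piAntidiag_filter_apply_le_mul_sub_le hp L N)
            (Nat.mul_le_mul_right _ (Finset.card_filter_le _ _))
      _ = _ := by ring
  calc {m ∈ s.piAntidiag N | ∃ p ∈ s, m p ≤ L}.card * N
      ≤ (∑ p ∈ s, {m ∈ s.piAntidiag N | m p ≤ L}.card) * N := by
        rw [hunion]
        exact Nat.mul_le_mul_right _ Finset.card_biUnion_le
    _ ≤ s.card • ((s.card * (L + 1) + L) * (s.piAntidiag N).card) := by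
        rw [Finset.sum_mul]
        exact Finset.sum_le_card_nsmul _ _ _ hpart
    _ = _ := by rw [smul_eq_mul, mul_assoc]

end Compositions

theorem ncard_mul_le_of_fiberwise {α κ : Type*} {B C : Set α} (hC : C.Finite) (hBC : B ⊆ C)
    (k : α → κ) {n c : ℕ}
    (h : ∀ x ∈ B, {y ∈ B | k y = k x}.ncard * n ≤ c * {y ∈ C | k y = k x}.ncard) :
    B.ncard * n ≤ c * C.ncard := by
  lift C to Finset α using hC
  lift B to Finset α using C.finite_toSet.subset hBC
  have hfiber (D : Finset α) (z : κ) : {y ∈ (D : Set α) | k y = z}.ncard =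
      {y ∈ D | k y = z}.card := by
    rw [← Set.ncard_coe_finset, Finset.coe_filter]
    rfl
  simp only [hfiber, Set.ncard_coe_finset] at h ⊢
  have hmaps (D : Finset α) (hD : D ⊆ C) : Set.MapsTo k D (C.image k) := fun x hx =>
    Finset.mem_coe.2 (Finset.mem_image_of_mem k (hD hx))
  rw [Finset.card_eq_sum_card_fiberwise (hmaps B (Finset.coe_subset.1 hBC)),
    Finset.card_eq_sum_card_fiberwise (hmaps C subset_rfl), Finset.sum_mul, Finset.mul_sum]
  refine Finset.sum_le_sum fun z _ => ?_
  rcases {y ∈ B | k y = z}.eq_empty_or_nonempty with hempty | ⟨x, hx⟩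
  · simp [hempty]
  · obtain ⟨hxB, rfl⟩ := Finset.mem_filter.1 hx
    exact h x hxB

section Weights

variable {A : Type*} {w : A → ℕ}

theorem finite_setOf_wt_eq [Finite A] (hw : ∀ a, 0 < w a) (n : ℕ) :
    {W : List A | wt w W = n}.Finite := by
  refine (List.finite_length_le A n).subset fun W hW => ?_
  calc W.length = (W.map w).length := (List.length_map w).symm
    _ ≤ wt w W := List.length_le_sum_of_one_le _ fun k hk => by
      obtain ⟨a, -, rfl⟩ := List.mem_map.1 hk
      exact hw a
    _ = n := hW

theorem wt_le_mul_length {K : ℕ} (hK : ∀ a, w a ≤ K) (W : List A) : wt w W ≤ K * W.length := by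
  have := List.sum_le_card_nsmul (W.map w) K (by simpa using fun a _ => hK a)
  rwa [List.length_map, smul_eq_mul, mul_comm] at this

theorem wt_reverse (W : List A) : wt w W.reverse = wt w W := by
  simp [wt, List.sum_reverse]

/-- The property `P` holds with probability `O(1/n)` for a uniformly random word of weight `n`
of the class `C`. It is expressed by counting, so that it is meaningful also for those `n` for
which `C` has no word of weight `n`. -/
def Rare (w : A → ℕ) (C : Set (List A)) (P : List A → Prop) : Prop :=
  ∃ c : ℕ, ∀ n : ℕ,
    {W | W ∈ C ∧ wt w W = n ∧ P W}.ncard * n ≤ c * {W | W ∈ C ∧ wt w W = n}.ncard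

namespace Rare

variable {C : Set (List A)} {P P' : List A → Prop}

theorem mono [Finite A] (hw : ∀ a, 0 < w a) (h : Rare w C P') (hP : ∀ W ∈ C, P W → P' W) :
    Rare w C P := by
  obtain ⟨c, hc⟩ := h
  refine ⟨c, fun n => (Nat.mul_le_mul_right n (Set.ncard_le_ncard ?_ ?_)).trans (hc n)⟩
  · exact fun W hW => ⟨hW.1, hW.2.1, hP W hW.1 hW.2.2⟩
  · exact (finite_setOf_wt_eq hw n).subset fun W hW => hW.2.1

theorem or (h : Rare w C P) (h' : Rare w C P') : Rare w C fun W => P W ∨ P' W := by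
  obtain ⟨c, hc⟩ := h
  obtain ⟨c', hc'⟩ := h'
  refine ⟨c + c', fun n => ?_⟩
  have hunion : {W | W ∈ C ∧ wt w W = n ∧ (P W ∨ P' W)} =
      {W | W ∈ C ∧ wt w W = n ∧ P W} ∪ {W | W ∈ C ∧ wt w W = n ∧ P' W} :=
    Set.ext fun W => by simp only [Set.mem_union, Set.mem_ofPred_eq]; tauto
  rw [hunion, add_mul]
  refine (Nat.mul_le_mul_right n (Set.ncard_union_le _ _)).trans ?_
  rw [add_mul]
  exact Nat.add_le_add (hc n) (hc' n)

theorem comp_reverse (h : Rare w C P) :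
    Rare w (List.reverse ⁻¹' C) fun W => P W.reverse := by
  have hcard (D : Set (List A)) : (List.reverse ⁻¹' D).ncard = D.ncard := by
    rw [← (List.reverse_involutive (α := A)).image_eq_preimage_symm,
      Set.ncard_image_of_injective D List.reverse_injective]
  obtain ⟨c, hc⟩ := h
  refine ⟨c, fun n => ?_⟩
  have := hc n
  rw [← hcard {W | W ∈ C ∧ _}, ← hcard {W | W ∈ C ∧ wt w W = n}] at this
  simpa only [Set.preimage_ofPred_eq, wt_reverse, Set.mem_preimage] using this

end Rare

end Weights

/-- A deterministic automaton over the alphabet `A` whose steps never decrease the state. -/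
structure InflationaryAutomaton (A σ : Type*) [PartialOrder σ] where
  step : σ → A → σ
  le_step : ∀ q a, q ≤ step q a

namespace InflationaryAutomaton

section Decomposition

variable {A σ : Type*} [PartialOrder σ] (M : InflationaryAutomaton A σ)

/-- The subword of transition symbols met when reading a word from the state `q`. -/
noncomputable def skeleton (q : σ) : List A → List A
  | [] => []
  | a :: W => if M.step q a = q then skeleton q W else a :: skeleton (M.step q a) W

/-- The length of the loop block of the state `p` when a word is read from the state `q`. -/
noncomputable def loopCount (q : σ) : List A → σ → ℕ
  | [], _ => 0
  | a :: W, p => loopCount (M.step q a) W p + if q = p ∧ M.step q a = p then 1 else 0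

/-- The words all of whose letters are transition symbols when read from the state `q`. -/
def IsSkeleton (q : σ) : List A → Prop
  | [] => True
  | a :: T => M.step q a ≠ q ∧ IsSkeleton (M.step q a) T

/-- The word with skeleton `T` in which the loop block of each state `p` consists of `m p`
copies of the letter `one`. -/
def fill (one : A) (m : σ → ℕ) (q : σ) : List A → List A
  | [] => List.replicate (m q) one
  | a :: T => List.replicate (m q) one ++ a :: fill one m (M.step q a) T

/-- The states visited while reading `W` from `q` at which `one` is a loop symbol. -/
noncomputable def loopStates (one : A) (q : σ) (W : List A) : Finset σ :=
  {p ∈ (W.scanl M.step q).toFinset | M.step p one = p}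

variable {M} {q p : σ} {a one : A} {W T : List A} {G : Set σ} {m m' : σ → ℕ}

theorem mem_loopStates :
    p ∈ M.loopStates one q W ↔ p ∈ W.scanl M.step q ∧ M.step p one = p := by
  simp [loopStates]

theorem mem_scanl_iff_exists_take :
    p ∈ W.scanl M.step q ↔ ∃ j ≤ W.length, (W.take j).foldl M.step q = p := by
  simp [List.mem_iff_getElem, List.getElem_scanl]

theorem self_mem_scanl : q ∈ W.scanl M.step q :=
  mem_scanl_iff_exists_take.2 ⟨0, W.length.zero_le, rfl⟩

theorem le_foldl (M : InflationaryAutomaton A σ) (q : σ) (W : List A) :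
    q ≤ W.foldl M.step q := by
  induction W generalizing q with
  | nil => exact le_rfl
  | cons a W ih => exact (M.le_step q a).trans (ih _)

theorem le_of_mem_scanl (h : p ∈ W.scanl M.step q) : q ≤ p := by
  obtain ⟨j, -, rfl⟩ := mem_scanl_iff_exists_take.1 h
  exact M.le_foldl q _

theorem lt_of_mem_scanl_step (ha : M.step q a ≠ q) (h : p ∈ W.scanl M.step (M.step q a)) :
    q < p :=
  ((M.le_step q a).lt_of_ne' ha).trans_le (le_of_mem_scanl h)

theorem isSkeleton_skeleton (M : InflationaryAutomaton A σ) (q : σ) (W : List A) :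
    M.IsSkeleton q (M.skeleton q W) := by
  induction W generalizing q with
  | nil => trivial
  | cons a W ih =>
    unfold skeleton
    split_ifs with h
    exacts [ih _, ⟨h, ih _⟩]

theorem foldl_skeleton (M : InflationaryAutomaton A σ) (q : σ) (W : List A) :
    (M.skeleton q W).foldl M.step q = W.foldl M.step q := by
  induction W generalizing q with
  | nil => rfl
  | cons a W ih =>
    unfold skeleton
    split_ifs with h
    · rw [ih, List.foldl_cons, h]
    · exact ih _

theorem mem_scanl_skeleton : p ∈ (M.skeleton q W).scanl M.step q ↔ p ∈ W.scanl M.step q := by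
  induction W generalizing q with
  | nil => rfl
  | cons a W ih =>
    unfold skeleton
    split_ifs with h
    · have : p = q → p ∈ W.scanl M.step q := fun hp => hp ▸ self_mem_scanl
      rw [ih, List.scanl_cons, List.mem_cons, h, or_iff_right_of_imp this]
    · simp only [List.scanl_cons, List.mem_cons, ih]

theorem loopStates_skeleton :
    M.loopStates one q (M.skeleton q W) = M.loopStates one q W := by
  ext p
  rw [mem_loopStates, mem_loopStates, mem_scanl_skeleton]

theorem IsSkeleton.pairwise_lt_scanl (hT : M.IsSkeleton q T) :
    (T.scanl M.step q).Pairwise (· < ·) := by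
  induction T generalizing q with
  | nil => simp
  | cons a T ih =>
    rw [List.scanl_cons, List.pairwise_cons]
    exact ⟨fun p hp => lt_of_mem_scanl_step hT.1 hp, ih hT.2⟩

theorem IsSkeleton.length_le_card [Fintype σ] (hT : M.IsSkeleton q T) :
    T.length ≤ Fintype.card σ := by
  have := hT.pairwise_lt_scanl.nodup.length_le_card
  rw [List.length_scanl] at this
  omega

theorem loopCount_eq_ncard (M : InflationaryAutomaton A σ) (q : σ) (W : List A) (p : σ) :
    M.loopCount q W p = {i : ℕ | i < W.length ∧ (W.take i).foldl M.step q = p ∧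
      (W.take (i + 1)).foldl M.step q = p}.ncard := by
  have hsum : M.loopCount q W p = ∑ i ∈ Finset.range W.length,
      if (W.take i).foldl M.step q = p ∧ (W.take (i + 1)).foldl M.step q = p then 1 else 0 := by
    induction W generalizing q with
    | nil => rfl
    | cons a W ih =>
      rw [List.length_cons, Finset.sum_range_succ', loopCount, ih]
      rfl
  rw [hsum, ← Finset.card_filter, ← Set.ncard_coe_finset]
  congr 1
  ext i
  simp

theorem mem_scanl_of_loopCount_ne_zero (h : M.loopCount q W p ≠ 0) :
    p ∈ W.scanl M.step q := by
  rw [loopCount_eq_ncard] at h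
  obtain ⟨i, hi, hp, -⟩ := Set.nonempty_of_ncard_ne_zero h
  exact mem_scanl_iff_exists_take.2 ⟨i, hi.le, hp⟩

theorem loopCount_cons_self (h : M.step q a = q) :
    M.loopCount q (a :: W) q = M.loopCount q W q + 1 := by
  simp [loopCount, h]

theorem loopCount_cons_of_ne (hp : p ≠ q) :
    M.loopCount q (a :: W) p = M.loopCount (M.step q a) W p := by
  simp [loopCount, hp.symm]

theorem loopCount_cons_of_step_ne (h : M.step q a ≠ q) :
    M.loopCount q (a :: W) = M.loopCount (M.step q a) W := by
  funext p
  by_cases hp : p = q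
  · simp [loopCount, hp, h]
  · exact loopCount_cons_of_ne hp

theorem loopCount_self_of_step_ne (h : M.step q a ≠ q) :
    M.loopCount (M.step q a) W q = 0 := by
  by_contra hne
  exact (lt_of_mem_scanl_step h (mem_scanl_of_loopCount_ne_zero hne)).false

theorem foldl_replicate_append {k : ℕ} (h : k ≠ 0 → M.step q one = q) :
    (List.replicate k one ++ W).foldl M.step q = W.foldl M.step q := by
  induction k with
  | zero => rfl
  | succ k ih =>
    have hq := h k.succ_ne_zero
    rw [List.replicate_succ, List.cons_append, List.foldl_cons, hq, ih fun _ => hq]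

theorem skeleton_replicate_append {k : ℕ} (h : k ≠ 0 → M.step q one = q) :
    M.skeleton q (List.replicate k one ++ W) = M.skeleton q W := by
  induction k with
  | zero => rfl
  | succ k ih =>
    have hq := h k.succ_ne_zero
    rw [List.replicate_succ, List.cons_append, skeleton, if_pos hq, ih fun _ => hq]

theorem loopCount_replicate_append {k : ℕ} (h : k ≠ 0 → M.step q one = q) :
    M.loopCount q (List.replicate k one ++ W) p =
      M.loopCount q W p + if p = q then k else 0 := by
  induction k with
  | zero => simp
  | succ k ih =>
    have hq := h k.succ_ne_zero
    rw [List.replicate_succ, List.cons_append]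
    by_cases hp : p = q
    · subst hp
      rw [loopCount_cons_self hq, ih fun _ => hq, if_pos rfl, if_pos rfl, add_assoc]
    · rw [loopCount_cons_of_ne hp, hq, ih fun _ => hq, if_neg hp, if_neg hp]

theorem foldl_fill (hm : ∀ p, m p ≠ 0 → M.step p one = p) :
    (M.fill one m q T).foldl M.step q = T.foldl M.step q := by
  induction T generalizing q with
  | nil => simpa [fill] using foldl_replicate_append (W := []) (hm q)
  | cons a T ih => rw [fill, foldl_replicate_append (hm q), List.foldl_cons, ih]; rfl

theorem IsSkeleton.skeleton_fill (hT : M.IsSkeleton q T)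
    (hm : ∀ p, m p ≠ 0 → M.step p one = p) : M.skeleton q (M.fill one m q T) = T := by
  induction T generalizing q with
  | nil => simpa [fill, skeleton] using skeleton_replicate_append (W := []) (hm q)
  | cons a T ih =>
    rw [fill, skeleton_replicate_append (hm q), skeleton, if_neg hT.1, ih hT.2]

theorem IsSkeleton.loopCount_fill (hT : M.IsSkeleton q T)
    (hm : ∀ p, m p ≠ 0 → M.step p one = p) :
    M.loopCount q (M.fill one m q T) p = if p ∈ T.scanl M.step q then m p else 0 := by
  induction T generalizing q with
  | nil =>
    have := loopCount_replicate_append (W := []) (p := p) (hm q)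
    rw [List.append_nil] at this
    rw [fill, this]
    by_cases hp : p = q <;> simp [loopCount, hp]
  | cons a T ih =>
    have hq : q ∉ T.scanl M.step (M.step q a) := fun h => (lt_of_mem_scanl_step hT.1 h).false
    rw [fill, loopCount_replicate_append (hm q), loopCount_cons_of_step_ne hT.1, ih hT.2]
    by_cases hp : p = q <;> simp [hp, hq]

theorem fill_congr (h : ∀ p, q ≤ p → m p = m' p) :
    M.fill one m q T = M.fill one m' q T := by
  induction T generalizing q with
  | nil => rw [fill, fill, h q le_rfl]
  | cons a T ih =>
    rw [fill, fill, h q le_rfl, ih fun p hp => h p ((M.le_step q a).trans hp)]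

theorem IsSkeleton.fill_succ (hT : M.IsSkeleton q T) (h : ∀ p, p ≠ q → m' p = m p)
    (hq : m' q = m q + 1) : M.fill one m' q T = one :: M.fill one m q T := by
  cases T with
  | nil => rw [fill, fill, hq, List.replicate_succ]
  | cons a T =>
    have hcongr : M.fill one m' (M.step q a) T = M.fill one m (M.step q a) T :=
      fill_congr fun p hp => h p (((M.le_step q a).lt_of_ne' hT.1).trans_le hp).ne'
    rw [fill, fill, hq, List.replicate_succ, hcongr]
    rfl

section UniqueLoopLetter

variable (hG : IsLowerSet G) (hloop : ∀ q ∈ G, ∀ a, M.step q a = q → a = one)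

include hG hloop

theorem step_eq_of_loopCount_ne_zero (hW : W.foldl M.step q ∈ G)
    (h : M.loopCount q W p ≠ 0) : M.step p one = p := by
  induction W generalizing q with
  | nil => exact absurd rfl h
  | cons a W ih =>
    by_cases htail : M.loopCount (M.step q a) W p = 0
    · obtain ⟨rfl, hstep⟩ : q = p ∧ M.step q a = p := by
        by_contra hne
        exact h (by simp [loopCount, htail, hne])
      rwa [← hloop q (hG (M.le_foldl q (a :: W)) hW) a hstep]
    · exact ih hW htail

theorem fill_loopCount_skeleton (hW : W.foldl M.step q ∈ G) :
    M.fill one (M.loopCount q W) q (M.skeleton q W) = W := by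
  induction W generalizing q with
  | nil => rfl
  | cons a W ih =>
    have htail := ih hW
    unfold skeleton
    split_ifs with h
    · have hone := hloop q (hG (M.le_foldl q (a :: W)) hW) a h
      rw [h] at htail
      rw [(M.isSkeleton_skeleton q W).fill_succ (m := M.loopCount q W)
        (fun p hp => by rw [loopCount_cons_of_ne hp, h]) (loopCount_cons_self h), htail, hone]
    · rw [fill, loopCount_cons_of_step_ne h, loopCount_self_of_step_ne h, htail]
      rfl

theorem mul_sum_loopCount_add_wt_skeleton [Fintype σ] (w : A → ℕ)
    (hW : W.foldl M.step q ∈ G) :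
    w one * ∑ p, M.loopCount q W p + wt w (M.skeleton q W) = wt w W := by
  induction W generalizing q with
  | nil => simp [loopCount, skeleton, wt]
  | cons a W ih =>
    have htail := ih hW
    have hcons (V : List A) : wt w (a :: V) = w a + wt w V := by simp [wt]
    unfold skeleton
    split_ifs with h
    · have hone := hloop q (hG (M.le_foldl q (a :: W)) hW) a h
      have hsum : ∑ p, M.loopCount q (a :: W) p = ∑ p, M.loopCount q W p + 1 := by
        simp [loopCount, Finset.sum_add_distrib, h]
      rw [h] at htail
      rw [hsum, hcons, hone, ← htail]
      ring
    · rw [loopCount_cons_of_step_ne h, hcons, hcons, ← htail]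
      ring

theorem count_le_length_skeleton (hW : W.foldl M.step q ∈ G) (ha : a ≠ one) :
    W.count a ≤ (M.skeleton q W).length := by
  induction W generalizing q with
  | nil => simp
  | cons b W ih =>
    have htail := ih hW
    unfold skeleton
    split_ifs with h
    · have hb := hloop q (hG (M.le_foldl q (b :: W)) hW) b h
      rw [h] at htail
      rwa [List.count_cons_of_ne (hb.trans_ne ha.symm)]
    · rw [List.count_cons, List.length_cons]
      split_ifs <;> omega

theorem sum_loopStates_loopCount [Fintype σ] (hW : W.foldl M.step q ∈ G) :
    ∑ p ∈ M.loopStates one q W, M.loopCount q W p = ∑ p, M.loopCount q W p := by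
  refine Finset.sum_subset (Finset.subset_univ _) fun p _ hp => ?_
  by_contra hne
  exact hp (mem_loopStates.2 ⟨mem_scanl_of_loopCount_ne_zero hne,
    step_eq_of_loopCount_ne_zero hG hloop hW hne⟩)

end UniqueLoopLetter

end Decomposition

section Counting

variable {A σ : Type*} [PartialOrder σ] [Fintype σ] {M : InflationaryAutomaton A σ} {q : σ}
  {one : A} {T : List A} {G : Set σ}

variable (M) in
/-- The words with skeleton `T` and `N` loop symbols, as read from the state `q`. -/
def wordsOver (q : σ) (T : List A) (N : ℕ) : Set (List A) :=
  {W | M.skeleton q W = T ∧ ∑ p, M.loopCount q W p = N}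

variable (hG : IsLowerSet G) (hloop : ∀ q ∈ G, ∀ a, M.step q a = q → a = one)

include hG hloop

theorem bijOn_loopCount_wordsOver (hT : M.IsSkeleton q T) (hTG : T.foldl M.step q ∈ G) (N : ℕ) :
    Set.BijOn (M.loopCount q) (M.wordsOver q T N)
      ((M.loopStates one q T).piAntidiag N : Set (σ → ℕ)) := by
  have hwords {W} (hW : W ∈ M.wordsOver q T N) : W.foldl M.step q ∈ G := by
    rwa [← foldl_skeleton, hW.1]
  have hcomp {m : σ → ℕ} (hm : m ∈ (M.loopStates one q T).piAntidiag N) :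
      (∀ p, m p ≠ 0 → M.step p one = p) ∧ M.loopCount q (M.fill one m q T) = m := by
    have hsupp (p) (hp : m p ≠ 0) := mem_loopStates.1 ((Finset.mem_piAntidiag.1 hm).2 p hp)
    refine ⟨fun p hp => (hsupp p hp).2, funext fun p => ?_⟩
    rw [hT.loopCount_fill fun p hp => (hsupp p hp).2, ite_eq_left_iff]
    exact fun hp => (not_not.1 (mt (fun h => (hsupp p h).1) hp)).symm
  refine Set.InvOn.bijOn (f' := fun m => M.fill one m q T) ⟨fun W hW => ?_, fun m hm => ?_⟩
    (fun W hW => Finset.mem_coe.2 (Finset.mem_piAntidiag.2 ⟨?_, fun p hp => ?_⟩)) fun m hm => ?_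
  · simpa only [hW.1] using fill_loopCount_skeleton hG hloop (hwords hW)
  · exact (hcomp hm).2
  · rw [← hW.1, loopStates_skeleton, sum_loopStates_loopCount hG hloop (hwords hW), hW.2]
  · rw [← hW.1, loopStates_skeleton, mem_loopStates]
    exact ⟨mem_scanl_of_loopCount_ne_zero hp,
      step_eq_of_loopCount_ne_zero hG hloop (hwords hW) hp⟩
  · obtain ⟨hloops, hcount⟩ := hcomp hm
    have hfill := hT.skeleton_fill hloops
    have hmem : M.fill one m q T ∈ {W | W.foldl M.step q ∈ G} := by
      simpa only [Set.mem_ofPred_eq, foldl_fill hloops] using hTG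
    refine ⟨hfill, ?_⟩
    rw [← sum_loopStates_loopCount hG hloop hmem, ← loopStates_skeleton, hfill, hcount]
    exact (Finset.mem_piAntidiag.1 hm).1

theorem ncard_wordsOver_exists_loopCount_le_mul_le (hT : M.IsSkeleton q T)
    (hTG : T.foldl M.step q ∈ G) (L N : ℕ) :
    {W ∈ M.wordsOver q T N | ∃ p ∈ M.loopStates one q T, M.loopCount q W p ≤ L}.ncard * N ≤
      Fintype.card σ * (Fintype.card σ * (L + 1) + L) * (M.wordsOver q T N).ncard := by
  set S := M.loopStates one q T
  have hbij := bijOn_loopCount_wordsOver hG hloop hT hTG N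
  have hshort : Set.BijOn (M.loopCount q)
      {W ∈ M.wordsOver q T N | ∃ p ∈ S, M.loopCount q W p ≤ L}
      ({m ∈ S.piAntidiag N | ∃ p ∈ S, m p ≤ L} : Finset (σ → ℕ)) := by
    convert hbij.subset_right (Finset.coe_subset.2 (Finset.filter_subset _ _)) using 1
    ext W
    simp only [Set.mem_ofPred_eq, Set.mem_inter_iff, Set.mem_preimage, Finset.coe_filter]
    exact and_congr_right fun hW => (and_iff_right (hbij.mapsTo hW)).symm
  rw [hshort.ncard_eq, hbij.ncard_eq, Set.ncard_coe_finset, Set.ncard_coe_finset]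
  refine (card_piAntidiag_filter_exists_le_mul_le S L N).trans (Nat.mul_le_mul_right _ ?_)
  have := S.card_le_univ
  gcongr

theorem wt_le_mul_sum_loopCount_add_card {w : A → ℕ} {K : ℕ} (hK : ∀ a, w a ≤ K) {W : List A}
    (hW : W.foldl M.step q ∈ G) :
    wt w W ≤ K * (∑ p, M.loopCount q W p + Fintype.card σ) := by
  calc wt w W = w one * ∑ p, M.loopCount q W p + wt w (M.skeleton q W) :=
        (mul_sum_loopCount_add_wt_skeleton hG hloop w hW).symm
    _ ≤ K * ∑ p, M.loopCount q W p + K * (M.skeleton q W).length :=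
        Nat.add_le_add (Nat.mul_le_mul_right _ (hK one)) (wt_le_mul_length hK _)
    _ ≤ K * (∑ p, M.loopCount q W p + Fintype.card σ) := by
        rw [← mul_add]
        gcongr
        exact (M.isSkeleton_skeleton q W).length_le_card

theorem foldl_mem_and_wt_eq_of_mem_wordsOver (w : A → ℕ) {V W : List A}
    (hV : V.foldl M.step q ∈ G)
    (hW : W ∈ M.wordsOver q (M.skeleton q V) (∑ p, M.loopCount q V p)) :
    W.foldl M.step q ∈ G ∧ wt w W = wt w V := by
  obtain ⟨hskel, hsum⟩ := hW
  have hWG : W.foldl M.step q ∈ G := by rwa [← foldl_skeleton, hskel, foldl_skeleton]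
  refine ⟨hWG, ?_⟩
  rw [← mul_sum_loopCount_add_wt_skeleton hG hloop w hWG, hskel, hsum,
    mul_sum_loopCount_add_wt_skeleton hG hloop w hV]

theorem finite_wordsOver (hT : M.IsSkeleton q T) (hTG : T.foldl M.step q ∈ G) (N : ℕ) :
    (M.wordsOver q T N).Finite :=
  (bijOn_loopCount_wordsOver hG hloop hT hTG N).finite_iff_finite.2 (Finset.finite_toSet _)

theorem ncard_wordsOver_exists_loopCount_le_mul_wt_le {w : A → ℕ} {K : ℕ} (hK : ∀ a, w a ≤ K)
    {V : List A} (hT : M.skeleton q V = T) {N : ℕ} (hN : ∑ p, M.loopCount q V p = N)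
    (hVG : V.foldl M.step q ∈ G) (L : ℕ) :
    {W ∈ M.wordsOver q T N | ∃ p ∈ M.loopStates one q T, M.loopCount q W p ≤ L}.ncard *
        wt w V ≤
      K * (Fintype.card σ * (Fintype.card σ * (L + 1) + L) + Fintype.card σ) *
        (M.wordsOver q T N).ncard := by
  set s := Fintype.card σ
  set short := {W ∈ M.wordsOver q T N | ∃ p ∈ M.loopStates one q T, M.loopCount q W p ≤ L}
  have hskel : M.IsSkeleton q T := hT ▸ M.isSkeleton_skeleton q V
  have hTG : T.foldl M.step q ∈ G := by rwa [← hT, foldl_skeleton]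
  have hshort : short.ncard ≤ (M.wordsOver q T N).ncard :=
    Set.ncard_le_ncard (fun W hW => hW.1) (finite_wordsOver hG hloop hskel hTG N)
  have hcount : short.ncard * N ≤ s * (s * (L + 1) + L) * (M.wordsOver q T N).ncard :=
    ncard_wordsOver_exists_loopCount_le_mul_le hG hloop hskel hTG L N
  calc short.ncard * wt w V ≤ short.ncard * (K * (N + s)) :=
        Nat.mul_le_mul_left _ (hN ▸ wt_le_mul_sum_loopCount_add_card hG hloop hK hVG)
    _ = K * (short.ncard * N + short.ncard * s) := by ring
    _ ≤ K * (s * (s * (L + 1) + L) * (M.wordsOver q T N).ncard +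
          (M.wordsOver q T N).ncard * s) := by gcongr
    _ = K * (s * (s * (L + 1) + L) + s) * (M.wordsOver q T N).ncard := by ring

omit [Fintype σ] in
theorem rare_exists_loopCount_le [Finite A] [Finite σ] {w : A → ℕ} (hw : ∀ a, 0 < w a) (q : σ)
    (L : ℕ) :
    Rare w {W | W.foldl M.step q ∈ G} fun W =>
      ∃ p ∈ M.loopStates one q W, M.loopCount q W p ≤ L := by
  have := Fintype.ofFinite σ
  obtain ⟨K, hK⟩ := (Set.finite_range w).bddAbove
  replace hK (a) : w a ≤ K := hK ⟨a, rfl⟩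
  set s := Fintype.card σ
  refine ⟨K * (s * (s * (L + 1) + L) + s), fun n => ?_⟩
  refine ncard_mul_le_of_fiberwise (k := fun W => (M.skeleton q W, ∑ p, M.loopCount q W p))
    ((finite_setOf_wt_eq hw n).subset fun W hW => hW.2)
    (Set.ofPred_subset_ofPred.2 fun W hW => ⟨hW.1, hW.2.1⟩) ?_
  rintro V ⟨hVG, rfl, -⟩
  convert ncard_wordsOver_exists_loopCount_le_mul_wt_le hG hloop hK rfl rfl hVG L using 3 <;>
    ext W <;> simp only [Set.mem_ofPred_eq, Prod.mk.injEq]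
  · constructor
    · rintro ⟨⟨-, -, hshort⟩, hW⟩
      exact ⟨hW, by rwa [← hW.1, loopStates_skeleton]⟩
    · rintro ⟨hW, hshort⟩
      obtain ⟨hWG, hwt⟩ := foldl_mem_and_wt_eq_of_mem_wordsOver hG hloop w hVG hW
      exact ⟨⟨hWG, hwt, by rwa [← hW.1, loopStates_skeleton] at hshort⟩, hW⟩
  · exact and_iff_right_of_imp (foldl_mem_and_wt_eq_of_mem_wordsOver hG hloop w hVG)

end Counting

end InflationaryAutomaton

section GrowthRates

variable {A : Type*} {w : A → ℕ} {S : Set A}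

-- The supremum defining `rhoOf w ∅` is over all `x ≥ 0`, and so takes the junk value `0`.
theorem growthOf_empty (w : A → ℕ) : growthOf w ∅ = 0 := by
  rw [growthOf, rhoOf, inv_eq_zero]
  refine Real.sSup_of_not_bddAbove fun ⟨b, hb⟩ => ?_
  have : |b| + 1 ≤ b := hb ⟨by positivity, by simp⟩
  linarith [le_abs_self b]

theorem nonempty_of_growthOf_ne_zero (h : growthOf w S ≠ 0) : S.Nonempty := by
  rw [Set.nonempty_iff_ne_empty]
  rintro rfl
  exact h (growthOf_empty w)

theorem le_one_sub_of_tsum_pow_le_one [Finite A] (hw : ∀ a, 0 < w a) {a b : A} (ha : a ∈ S)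
    (hb : b ∈ S) (hab : a ≠ b) {x : ℝ} (hx : 0 ≤ x) (h : ∑' c : S, x ^ w c ≤ 1) :
    x ≤ 1 - 1 / (2 * max (w a) (w b) : ℕ) := by
  have := Fintype.ofFinite S
  set k := max (w a) (w b)
  have hpair : x ^ w a + x ^ w b ≤ 1 := by
    have hne : (⟨a, ha⟩ : S) ≠ ⟨b, hb⟩ := fun h => hab (congrArg Subtype.val h)
    rw [tsum_fintype] at h
    rw [← Finset.sum_pair (f := fun c : S => x ^ w c) hne]
    exact (Finset.sum_le_univ_sum_of_nonneg fun c => pow_nonneg hx _).trans h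
  have hx1 : x ≤ 1 :=
    (pow_le_one_iff_of_nonneg hx (hw a).ne').1 (by linarith [pow_nonneg hx (w b)])
  have hhalf : x ^ k ≤ 1 / 2 := by
    have hka := pow_le_pow_of_le_one hx hx1 (le_max_left (w a) (w b))
    have hkb := pow_le_pow_of_le_one hx hx1 (le_max_right (w a) (w b))
    linarith
  have hbernoulli : 1 + k * (x - 1) ≤ x ^ k := by
    simpa using one_add_mul_le_pow (show -2 ≤ x - 1 by linarith) k
  have hk : (0 : ℝ) < k := Nat.cast_pos.2 ((hw a).trans_le (le_max_left _ _))
  rw [le_sub_comm, Nat.cast_mul, Nat.cast_ofNat, div_le_iff₀ (by positivity)]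
  linarith

theorem tsum_inv_card_pow_le_one [Finite S] (hw : ∀ a, 0 < w a) :
    ∑' a : S, ((Nat.card S : ℝ)⁻¹) ^ w a ≤ 1 := by
  have := Fintype.ofFinite S
  have hpow (a : S) : ((Nat.card S : ℝ)⁻¹) ^ w a ≤ (Nat.card S : ℝ)⁻¹ :=
    pow_le_of_le_one (by positivity) (Nat.cast_inv_le_one _) (hw a).ne'
  calc ∑' a : S, ((Nat.card S : ℝ)⁻¹) ^ w a ≤ ∑ _a : S, (Nat.card S : ℝ)⁻¹ := by
        rw [tsum_fintype]
        exact Finset.sum_le_sum fun a _ => hpow a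
    _ = Nat.card S * (Nat.card S : ℝ)⁻¹ := by
        rw [Finset.sum_const, nsmul_eq_mul, Finset.card_univ, Nat.card_eq_fintype_card]
    _ ≤ 1 := mul_inv_le_one

theorem one_lt_growthOf [Finite A] (hw : ∀ a, 0 < w a) {a b : A} (ha : a ∈ S) (hb : b ∈ S)
    (hab : a ≠ b) : 1 < growthOf w S := by
  have hbound : ∀ x ∈ {x : ℝ | 0 ≤ x ∧ ∑' c : S, x ^ w (c : A) ≤ 1},
      x ≤ 1 - 1 / (2 * max (w a) (w b) : ℕ) :=
    fun x hx => le_one_sub_of_tsum_pow_le_one hw ha hb hab hx.1 hx.2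
  have hmem : (Nat.card S : ℝ)⁻¹ ∈ {x : ℝ | 0 ≤ x ∧ ∑' c : S, x ^ w (c : A) ≤ 1} :=
    ⟨by positivity, tsum_inv_card_pow_le_one hw⟩
  have hpos : 0 < rhoOf w S := by
    have : Nonempty S := ⟨⟨a, ha⟩⟩
    have hcard : (0 : ℝ) < (Nat.card S : ℝ)⁻¹ := inv_pos.2 (Nat.cast_pos.2 Nat.card_pos)
    exact hcard.trans_le (le_csSup ⟨_, hbound⟩ hmem)
  have hlt : rhoOf w S < 1 := by
    refine (csSup_le ⟨_, hmem⟩ hbound).trans_lt (sub_lt_self _ ?_)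
    have := (hw a).trans_le (le_max_left (w a) (w b))
    positivity
  exact (one_lt_inv₀ hpos).2 hlt

end GrowthRates

namespace EmbeddingOrder

variable {A : Type*} {w : A → ℕ} (E : EmbeddingOrder A w) {f : ℕ} (φ : Fin f → List A)

section Order

include E in
theorem weight_pos (a : A) : 0 < w a := by
  simpa using E.weight_lt (E.nil_le [a]) (List.cons_ne_nil a []).symm

theorem le_iff_forall₂ {W V : List A} : E.le W V ↔
    ∃ Ws : List (List A), List.Forall₂ (fun U a => E.le U [a]) Ws V ∧ Ws.flatten = W := by
  rw [E.le_iff_factor]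
  refine exists_congr fun Ws => ?_
  rw [List.forall₂_iff_zip, Prod.forall, and_assoc]
  exact and_congr_right' and_comm

theorem append_le_append {U V X Y : List A} (hUX : E.le U X) (hVY : E.le V Y) :
    E.le (U ++ V) (X ++ Y) := by
  rw [le_iff_forall₂] at *
  obtain ⟨Us, hUs, rfl⟩ := hUX
  obtain ⟨Vs, hVs, rfl⟩ := hVY
  exact ⟨Us ++ Vs, List.rel_append hUs hVs, List.flatten_append⟩

theorem exists_eq_append_of_le_append {Z X Y : List A} (h : E.le Z (X ++ Y)) :
    ∃ U V, Z = U ++ V ∧ E.le U X ∧ E.le V Y := by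
  obtain ⟨Ws, hWs, rfl⟩ := E.le_iff_forall₂.1 h
  refine ⟨(Ws.take X.length).flatten, (Ws.drop X.length).flatten, ?_, ?_, ?_⟩
  · rw [← List.flatten_append, List.take_append_drop]
  · exact E.le_iff_forall₂.2 ⟨_, List.forall₂_take_append _ _ _ hWs, rfl⟩
  · exact E.le_iff_forall₂.2 ⟨_, List.forall₂_drop_append _ _ _ hWs, rfl⟩

theorem le_append_right (U V : List A) : E.le U (U ++ V) := by
  simpa using E.append_le_append (E.le_refl U) (E.nil_le V)

end Order

section PrefixStates

variable {φ}

theorem pstate_mem (W : List A) (i : Fin f) :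
    E.pstate φ W i ≤ (φ i).length ∧ E.le ((φ i).take (E.pstate φ W i)) W :=
  Nat.sSup_mem (s := {p | p ≤ (φ i).length ∧ E.le ((φ i).take p) W})
    ⟨0, Nat.zero_le _, by simpa using E.nil_le W⟩ ⟨(φ i).length, fun _ hp => hp.1⟩

theorem take_le_iff {i : Fin f} {W : List A} {p : ℕ} (hp : p ≤ (φ i).length) :
    E.le ((φ i).take p) W ↔ p ≤ E.pstate φ W i := by
  refine ⟨fun h => le_csSup ⟨(φ i).length, fun _ hp => hp.1⟩ ⟨hp, h⟩, fun h => ?_⟩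
  refine E.le_trans ?_ (E.pstate_mem (φ := φ) W i).2
  obtain ⟨V, hV⟩ := List.take_prefix_take_left h (l := φ i)
  exact hV ▸ E.le_append_right _ V

theorem pstate_mono {X Y : List A} (h : E.le X Y) : E.pstate φ X ≤ E.pstate φ Y := fun i =>
  (E.take_le_iff (E.pstate_mem X i).1).1 (E.le_trans (E.pstate_mem X i).2 h)

theorem mem_Cset_iff {W : List A} :
    W ∈ E.Cset φ ↔ ∀ i, E.pstate φ W i < (φ i).length := by
  refine forall_congr' fun i => ?_
  rw [← not_le, ← E.take_le_iff le_rfl, List.take_length]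

theorem take_le_append_singleton_iff {i : Fin f} {X : List A} {a : A} {p : ℕ}
    (hp : p ≤ (φ i).length) : E.le ((φ i).take p) (X ++ [a]) ↔
      ∃ u ≤ p, u ≤ E.pstate φ X i ∧ E.le (((φ i).take p).drop u) [a] := by
  have htake {u : ℕ} (hu : u ≤ p) : ((φ i).take p).take u = (φ i).take u := by
    rw [List.take_take, min_eq_left hu]
  constructor
  · intro h
    obtain ⟨U, V, hUV, hU, hV⟩ := E.exists_eq_append_of_le_append h
    have hlen : U.length ≤ p := by
      have := congrArg List.length hUV
      rw [List.length_take, List.length_append] at this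
      omega
    refine ⟨U.length, hlen, ?_, ?_⟩
    · rwa [← E.take_le_iff (hlen.trans hp), ← htake hlen, hUV, List.take_left]
    · rwa [hUV, List.drop_left]
  · rintro ⟨u, hup, hu, hdrop⟩
    rw [← E.take_le_iff (hup.trans hp), ← htake hup] at hu
    simpa only [List.take_append_drop] using E.append_le_append hu hdrop

theorem pstate_append_singleton_congr {X Y : List A} (h : E.pstate φ X = E.pstate φ Y) (a : A) :
    E.pstate φ (X ++ [a]) = E.pstate φ (Y ++ [a]) := by
  funext i
  unfold pstate
  congr 1
  ext p
  refine and_congr_right fun hp => ?_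
  rw [E.take_le_append_singleton_iff hp, E.take_le_append_singleton_iff hp, h]

theorem mem_stateLoopP_pstate {X : List A} {a : A} :
    a ∈ E.stateLoopP φ (E.pstate φ X) ↔ E.pstate φ (X ++ [a]) = E.pstate φ X :=
  ⟨fun h => h X rfl, fun h _ hY => (E.pstate_append_singleton_congr hY a).trans h⟩

theorem mem_stateLoopP_pstate_of_le {X : List A} {a b : A} (hba : E.le [b] [a])
    (ha : a ∈ E.stateLoopP φ (E.pstate φ X)) : b ∈ E.stateLoopP φ (E.pstate φ X) := by
  rw [mem_stateLoopP_pstate] at ha ⊢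
  refine _root_.le_antisymm ?_ (E.pstate_mono (E.le_append_right X [b]))
  exact (E.pstate_mono (E.append_le_append (E.le_refl X) hba)).trans_eq ha

end PrefixStates

section PrefixAutomaton

theorem finite_range_pstate : (Set.range (E.pstate φ)).Finite :=
  (Set.finite_Iic fun i => (φ i).length).subset <| Set.range_subset_iff.2
    fun X i => (E.pstate_mem X i).1

noncomputable instance : Fintype (Set.range (E.pstate φ)) := (E.finite_range_pstate φ).fintype

/-- The automaton computing prefix states. Its step is defined on a representative word of the
state, on the choice of which it does not depend. -/
noncomputable def prefixAutomaton : InflationaryAutomaton A (Set.range (E.pstate φ)) where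
  step q a := ⟨E.pstate φ (q.2.choose ++ [a]), _, rfl⟩
  le_step q _ := Subtype.coe_le_coe.1
    (q.2.choose_spec.symm.trans_le (E.pstate_mono (E.le_append_right _ _)))

/-- The state of the prefix automaton reached by the word `W`. -/
noncomputable def reachedState (W : List A) : Set.range (E.pstate φ) := ⟨E.pstate φ W, W, rfl⟩

/-- The valid prefix states, as states of the prefix automaton. -/
def validStates : Set (Set.range (E.pstate φ)) := {q | ∀ i, q.1 i < (φ i).length}

variable {φ}

theorem reachedState_inj {V W : List A} :
    E.reachedState φ V = E.reachedState φ W ↔ E.pstate φ V = E.pstate φ W :=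
  Subtype.ext_iff

theorem step_reachedState (X : List A) (a : A) :
    (E.prefixAutomaton φ).step (E.reachedState φ X) a = E.reachedState φ (X ++ [a]) :=
  Subtype.ext (E.pstate_append_singleton_congr (E.reachedState φ X).2.choose_spec a)

theorem foldl_prefixAutomaton (W : List A) :
    W.foldl (E.prefixAutomaton φ).step (E.reachedState φ []) = E.reachedState φ W := by
  induction W using List.reverseRecOn with
  | nil => rfl
  | append_singleton W a ih =>
    rw [List.foldl_append, ih, List.foldl_cons, List.foldl_nil, step_reachedState]

theorem isLowerSet_validStates : IsLowerSet (E.validStates φ) :=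
  fun _ _ hle hq i => (hle i).trans_lt (hq i)

theorem reachedState_mem_validStates {W : List A} :
    E.reachedState φ W ∈ E.validStates φ ↔ W ∈ E.Cset φ :=
  E.mem_Cset_iff.symm

theorem step_reachedState_eq_self_iff {X : List A} {a : A} :
    (E.prefixAutomaton φ).step (E.reachedState φ X) a = E.reachedState φ X ↔
      a ∈ E.stateLoopP φ (E.pstate φ X) := by
  rw [step_reachedState, mem_stateLoopP_pstate, reachedState_inj]

theorem loopCount_reachedState (W X : List A) :
    (E.prefixAutomaton φ).loopCount (E.reachedState φ []) W (E.reachedState φ X) =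
      E.blockLenP φ W (E.pstate φ X) := by
  rw [InflationaryAutomaton.loopCount_eq_ncard]
  simp only [foldl_prefixAutomaton, reachedState_inj, blockLenP]

end PrefixAutomaton

section ShortBlocks

variable {one : A} {L : ℕ}

/-- The letter `one` is the only loop symbol, at all valid prefix states. -/
def OnlyLoopLetter (one : A) : Prop :=
  ∀ X ∈ E.Cset φ, E.stateLoopP φ (E.pstate φ X) ⊆ {one}

/-- Some prefix loop block of `W` over a nonempty loop alphabet has length at most `L`. In a
polynomial class, the blocks over a nonempty loop alphabet are the dominant ones. -/
def HasShortBlockP (L : ℕ) (W : List A) : Prop :=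
  ∃ q, (∃ j ≤ W.length, E.pstate φ (W.take j) = q) ∧ (E.stateLoopP φ q).Nonempty ∧
    E.blockLenP φ W q ≤ L

/-- The suffix analogue of `HasShortBlockP`. -/
def HasShortBlockS (L : ℕ) (W : List A) : Prop :=
  ∃ q, (∃ j ≤ W.length, E.sstate φ (W.drop j) = q) ∧ (E.stateLoopS φ q).Nonempty ∧
    E.blockLenS φ W q ≤ L

variable {E φ}

theorem OnlyLoopLetter.eq_of_step_eq_self (h : E.OnlyLoopLetter φ one) :
    ∀ q ∈ E.validStates φ, ∀ a, (E.prefixAutomaton φ).step q a = q → a = one := by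
  rintro ⟨_, X, rfl⟩ hX a ha
  exact h X (E.mem_Cset_iff.2 hX) (E.step_reachedState_eq_self_iff.1 ha)

theorem foldl_mem_validStates {W : List A} :
    W.foldl (E.prefixAutomaton φ).step (E.reachedState φ []) ∈ E.validStates φ ↔
      W ∈ E.Cset φ := by
  rw [foldl_prefixAutomaton, reachedState_mem_validStates]

theorem OnlyLoopLetter.rare_hasShortBlockP [Finite A] (h : E.OnlyLoopLetter φ one)
    (hone_le : ∀ a, E.le [one] [a]) (L : ℕ) : Rare w (E.Cset φ) (E.HasShortBlockP φ L) := by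
  have hrare := InflationaryAutomaton.rare_exists_loopCount_le E.isLowerSet_validStates
    h.eq_of_step_eq_self E.weight_pos (E.reachedState φ []) L
  simp only [foldl_mem_validStates, Set.ofPred_mem_eq] at hrare
  refine hrare.mono E.weight_pos ?_
  rintro W - ⟨_, ⟨j, hj, rfl⟩, ⟨a, ha⟩, hshort⟩
  refine ⟨E.reachedState φ (W.take j), InflationaryAutomaton.mem_loopStates.2 ⟨?_, ?_⟩, ?_⟩
  · exact InflationaryAutomaton.mem_scanl_iff_exists_take.2 ⟨j, hj, E.foldl_prefixAutomaton _⟩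
  · exact E.step_reachedState_eq_self_iff.2 (E.mem_stateLoopP_pstate_of_le (hone_le a) ha)
  · exact (E.loopCount_reachedState W _).trans_le hshort

-- The condition on letter counts is invariant under reversal of the words.
theorem onlyLoopLetter_iff_exists_count_le : E.OnlyLoopLetter φ one ↔
    ∃ N : ℕ, ∀ W ∈ E.Cset φ, ∀ a ≠ one, W.count a ≤ N := by
  constructor
  · refine fun h => ⟨Fintype.card (Set.range (E.pstate φ)), fun W hW a ha => ?_⟩
    exact (InflationaryAutomaton.count_le_length_skeleton E.isLowerSet_validStates
      h.eq_of_step_eq_self (foldl_mem_validStates.2 hW) ha).trans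
      (InflationaryAutomaton.isSkeleton_skeleton _ _ W).length_le_card
  · rintro ⟨N, hN⟩ X hX a ha
    by_contra hne
    have hpump (k : ℕ) : E.pstate φ (X ++ List.replicate k a) = E.pstate φ X := by
      induction k with
      | zero => simp
      | succ k ih => rw [List.replicate_succ', ← List.append_assoc, ha _ ih]
    have hmem : X ++ List.replicate (N + 1) a ∈ E.Cset φ := by
      rw [mem_Cset_iff, hpump]
      exact E.mem_Cset_iff.1 hX
    have := hN _ hmem a hne
    rw [List.count_append, List.count_replicate_self] at this
    omega

theorem onlyLoopLetter_of_gammaC_le_one [Finite A] (hone_le : ∀ a, E.le [one] [a])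
    (hγ : E.gammaC φ ≤ 1) : E.OnlyLoopLetter φ one := by
  intro X hX a ha
  by_contra hne
  have hbdd : BddAbove {g : ℝ | ∃ X ∈ E.Cset φ,
      g = growthOf w (E.stateLoopP φ (E.pstate φ X))} := by
    refine ((Set.finite_range fun S : Set A => growthOf w S).subset ?_).bddAbove
    rintro _ ⟨X, -, rfl⟩
    exact ⟨_, rfl⟩
  have hgrowth : growthOf w (E.stateLoopP φ (E.pstate φ X)) ≤ E.gammaC φ :=
    le_csSup hbdd ⟨X, hX, rfl⟩
  exact (one_lt_growthOf E.weight_pos ha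
    (E.mem_stateLoopP_pstate_of_le (hone_le a) ha) hne).not_ge (hgrowth.trans hγ)

theorem hasShortBlockP_of_not_allDomLargeP (hγ : E.gammaC φ ≠ 0) {K Q : ℕ} {W : List A}
    (h : ¬ E.AllDomLargeP φ K Q W) : E.HasShortBlockP φ (2 * K * Q) W := by
  simp only [AllDomLargeP, not_forall, Nat.not_le] at h
  obtain ⟨q, hq, hdom, hlen⟩ := h
  exact ⟨q, hq, nonempty_of_growthOf_ne_zero (hdom.trans_ne hγ), Nat.lt_succ_iff.1 hlen⟩

theorem hasShortBlockS_of_not_allDomLargeS (hγ : E.gammaC φ ≠ 0) {K Q : ℕ} {W : List A}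
    (h : ¬ E.AllDomLargeS φ K Q W) : E.HasShortBlockS φ (2 * K * Q) W := by
  simp only [AllDomLargeS, not_forall, Nat.not_le] at h
  obtain ⟨q, hq, hdom, hlen⟩ := h
  exact ⟨q, hq, nonempty_of_growthOf_ne_zero (hdom.trans_ne hγ), Nat.lt_succ_iff.1 hlen⟩

end ShortBlocks

section Reversal

/-- The embedding order in which `U` is below `V` if the reversal of `U` is below that of `V`; it
turns suffix states into prefix states. -/
def rev : EmbeddingOrder A w where
  le U V := E.le U.reverse V.reverse
  le_refl _ := E.le_refl _
  le_trans := E.le_trans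
  le_antisymm hVW hWV := List.reverse_injective (E.le_antisymm hVW hWV)
  nil_le _ := E.nil_le _
  weight_lt h hne := by
    simpa [List.sum_reverse] using E.weight_lt h (List.reverse_injective.ne hne)
  le_iff_factor W V := by
    have hsurj : Function.Surjective fun Ws : List (List A) => (Ws.map List.reverse).reverse :=
      Function.Involutive.surjective fun Ws => by simp
    rw [E.le_iff_forall₂, hsurj.exists]
    refine exists_congr fun Ws => ?_
    rw [List.forall₂_reverse_iff, List.forall₂_map_left_iff, ← List.reverse_flatten,
      List.reverse_inj, List.forall₂_iff_zip, Prod.forall, and_assoc]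
    exact and_congr_right' and_comm

/-- The reversals of the words `φ i`. -/
def revWords : Fin f → List A := fun i => (φ i).reverse

theorem Cset_rev : E.rev.Cset (revWords φ) = List.reverse ⁻¹' E.Cset φ := by
  simp [Cset, rev, revWords]

theorem sstate_eq_pstate_rev (W : List A) :
    E.sstate φ W = E.rev.pstate (revWords φ) W.reverse := by
  funext i
  simp [sstate, pstate, rev, revWords, List.take_reverse]

theorem sstate_drop_eq_pstate_rev (W : List A) (j : ℕ) :
    E.sstate φ (W.drop j) = E.rev.pstate (revWords φ) (W.reverse.take (W.length - j)) := by
  rw [sstate_eq_pstate_rev, List.reverse_drop]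

theorem stateLoopS_eq_stateLoopP_rev (s : Fin f → ℕ) :
    E.stateLoopS φ s = E.rev.stateLoopP (revWords φ) s := by
  ext a
  simp only [stateLoopS, stateLoopP, Set.mem_ofPred_eq, sstate_eq_pstate_rev, List.reverse_cons]
  exact (List.reverse_surjective (α := A)).forall
    (p := fun X => E.rev.pstate _ X = s → E.rev.pstate _ (X ++ [a]) = s) |>.symm

theorem blockLenS_eq_blockLenP_rev (W : List A) (q : Fin f → ℕ) :
    E.blockLenS φ W q = E.rev.blockLenP (revWords φ) W.reverse q := by
  refine Set.ncard_congr (fun i _ => W.length - 1 - i) ?_ ?_ ?_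
  · rintro i ⟨hi, hq, hq'⟩
    rw [sstate_drop_eq_pstate_rev] at hq hq'
    refine ⟨by rw [List.length_reverse]; omega, ?_, ?_⟩
    · rwa [show W.length - 1 - i = W.length - (i + 1) by omega]
    · rwa [show W.length - 1 - i + 1 = W.length - i by omega]
  · rintro i j ⟨hi, -⟩ ⟨hj, -⟩ hij
    omega
  · rintro j ⟨hj, hq, hq'⟩
    rw [List.length_reverse] at hj
    refine ⟨W.length - 1 - j, ⟨by omega, ?_, ?_⟩, by omega⟩ <;> rw [sstate_drop_eq_pstate_rev]
    · rwa [show W.length - (W.length - 1 - j + 1) = j by omega]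
    · rwa [show W.length - (W.length - 1 - j) = j + 1 by omega]

variable {E φ} {one : A} {L : ℕ}

theorem HasShortBlockS.rev {W : List A} (h : E.HasShortBlockS φ L W) :
    E.rev.HasShortBlockP (revWords φ) L W.reverse := by
  obtain ⟨q, ⟨j, -, hq⟩, hne, hshort⟩ := h
  rw [sstate_drop_eq_pstate_rev] at hq
  rw [stateLoopS_eq_stateLoopP_rev] at hne
  rw [blockLenS_eq_blockLenP_rev] at hshort
  exact ⟨q, ⟨W.length - j, by simp, hq⟩, hne, hshort⟩

theorem OnlyLoopLetter.rev (h : E.OnlyLoopLetter φ one) :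
    E.rev.OnlyLoopLetter (revWords φ) one := by
  rw [onlyLoopLetter_iff_exists_count_le, Cset_rev] at *
  obtain ⟨N, hN⟩ := h
  exact ⟨N, fun W hW a ha => W.count_reverse ▸ hN _ hW a ha⟩

theorem OnlyLoopLetter.rare_hasShortBlockS [Finite A] (h : E.OnlyLoopLetter φ one)
    (hone_le : ∀ a, E.le [one] [a]) (L : ℕ) : Rare w (E.Cset φ) (E.HasShortBlockS φ L) := by
  have hrare := (h.rev.rare_hasShortBlockP hone_le L).comp_reverse
  simp only [Cset_rev, ← Set.preimage_comp, List.reverse_involutive.comp_self,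
    Set.preimage_id] at hrare
  exact hrare.mono E.weight_pos fun W _ hW => hW.rev

end Reversal

end EmbeddingOrder

theorem dominant_blocks_large_general {A : Type*} [Finite A] {w : A → ℕ}
    (E : EmbeddingOrder A w) {f : ℕ} (φ : Fin f → List A)
    (one : A) (hone_le : ∀ a : A, E.le [one] [a]) (hpoly : E.gammaC φ = 1) (K Q : ℕ) :
    ∃ c : ℝ, 0 < c ∧ ∀ n : ℕ,
      (Set.ncard {W : List A | W ∈ E.Cset φ ∧ wt w W = n ∧
          ¬ (E.AllDomLargeP φ K Q W ∧ E.AllDomLargeS φ K Q W)} : ℝ) * n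
        ≤ c * (Set.ncard {W : List A | W ∈ E.Cset φ ∧ wt w W = n} : ℝ) := by
  have hloop : E.OnlyLoopLetter φ one := onlyLoopLetter_of_gammaC_le_one hone_le hpoly.le
  have hγ : E.gammaC φ ≠ 0 := hpoly.trans_ne one_ne_zero
  have hrare : Rare w (E.Cset φ) fun W =>
      ¬ (E.AllDomLargeP φ K Q W ∧ E.AllDomLargeS φ K Q W) :=
    ((hloop.rare_hasShortBlockP hone_le (2 * K * Q)).or
      (hloop.rare_hasShortBlockS hone_le (2 * K * Q))).mono E.weight_pos fun W _ hW =>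
        (not_and_or.1 hW).imp (hasShortBlockP_of_not_allDomLargeP hγ)
          (hasShortBlockS_of_not_allDomLargeS hγ)
  obtain ⟨c, hc⟩ := hrare
  refine ⟨c + 1, by positivity, fun n => ?_⟩
  exact_mod_cast (hc n).trans (Nat.mul_le_mul_right _ c.le_succ)

/-- **Lemma `lem-bigblocks`.**  Let `C` be an unbounded polynomial class (dominant
growth rate `γ = 1`, unbounded growth function).  With probability `1 − O(1/n)`, in a
uniformly random word `W ∈ C_n`, all the dominant loop blocks in the prefix and the
suffix decompositions of `W` are large (length at least `2KQ + 1`).  (Stated by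
counting: the number of weight-`n` words of `C` failing this is at most `c·|C_n|/n`.) -/
theorem dominant_blocks_large {A : Type*} [Fintype A] {w : A → ℕ}
    (E : EmbeddingOrder A w) {f : ℕ} (φ : Fin f → List A)
    (hw : ∀ a, 0 < w a)
    (one : A) (hone : w one = 1) (hone_le : ∀ a : A, E.le [one] [a])
    (hf : 0 < f) (hφne : ∀ i, φ i ≠ [])
    (hφmin : ∀ i ψ, E.le ψ (φ i) → ψ ≠ φ i → ψ ∈ E.Cset φ)
    (hunb : ¬ ∃ M : ℕ, ∀ n : ℕ,
      Set.ncard {W : List A | W ∈ E.Cset φ ∧ EmbeddingOrder.wt w W = n} ≤ M)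
    (hpoly : E.gammaC φ = 1) :
    ∃ c : ℝ, 0 < c ∧ ∀ n : ℕ,
      (Set.ncard {W : List A | W ∈ E.Cset φ ∧ wt w W = n ∧
          ¬ (E.AllDomLargeP φ (Kmax A w) (E.Qconst φ) W ∧
              E.AllDomLargeS φ (Kmax A w) (E.Qconst φ) W)} : ℝ) * n
        ≤ c * (Set.ncard {W : List A | W ∈ E.Cset φ ∧ wt w W = n} : ℝ) :=
  dominant_blocks_large_general E φ one hone_le hpoly (Kmax A w) (E.Qconst φ)
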